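/- arXiv:2005.07067 — 2 statements merged into one kernel-verified Lean document; each statement's English description precedes it below -/
import Mathlib

section
/- The limit lim_{n→∞} ‖K^n 𝟙‖_p^{1/n} exists and equals the spectral radius ρ(K), where 𝟙 denotes the constant function equal to 1 on X. Consequently the quantity Λ_p = β ρ(K)^{1/θ} is well defined. -/
open MeasureTheory Filter Topology ENNReal

/-- The spectral radius of a bounded linear operator, via the Gelfand formula
`ρ(K) = lim_n ‖K^n‖^(1/n) = inf_{n ≥ 1} ‖K^n‖^(1/n)`. -/
noncomputable def specRad {E : Type*} [NormedAddCommGroup E] [NormedSpace ℝ E]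
    (K : E →L[ℝ] E) : ℝ := ⨅ n : ℕ, ‖K ^ (n + 1)‖ ^ (1 / (n + 1) : ℝ)

/-!
Since `π` has density `d`, the operator `K` has the kernel `k x y / d y` with respect to `π`; this
is nonnegative and, as `X` is compact, bounded by some `M`. Hence `|K f| ≤ C ‖f‖ 𝟙` pointwise, with
`C` depending only on `M`, `p` and `π`, and applying the positive operator `K ^ n` gives
`‖K ^ (n + 1)‖ ≤ C ‖K ^ n 𝟙‖`. Together with `‖K ^ n 𝟙‖ ≤ ‖K ^ n‖ ‖𝟙‖` this squeezes
`‖K ^ n 𝟙‖ ^ (1 / n)` between two sequences which converge to the spectral radius by Gelfand's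
formula.
-/

section RootLimits

variable {a b : ℕ → ℝ} {L : ℝ}

lemma tendsto_root_const_mul {C : ℝ} (ha : ∀ n, 0 ≤ a n) (hC : 0 < C)
    (h : Tendsto (fun n : ℕ ↦ a n ^ (1 / n : ℝ)) atTop (𝓝 L)) :
    Tendsto (fun n : ℕ ↦ (C * a n) ^ (1 / n : ℝ)) atTop (𝓝 L) := by
  have hroot : Tendsto (fun n : ℕ ↦ C ^ (1 / n : ℝ)) atTop (𝓝 1) := by
    simpa only [Real.rpow_zero] using
      tendsto_const_nhds.rpow (tendsto_one_div_atTop_nhds_zero_nat (𝕜 := ℝ)) (.inl hC.ne')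
  simpa only [one_mul, Real.mul_rpow hC.le (ha _)] using hroot.mul h

lemma tendsto_root_succ (ha : ∀ n, 0 ≤ a n)
    (h : Tendsto (fun n : ℕ ↦ a n ^ (1 / n : ℝ)) atTop (𝓝 L)) :
    Tendsto (fun n : ℕ ↦ a (n + 1) ^ (1 / n : ℝ)) atTop (𝓝 L) := by
  have hexponent : Tendsto (fun n : ℕ ↦ 1 + 1 / (n : ℝ)) atTop (𝓝 1) := by
    simpa only [add_zero] using (tendsto_one_div_atTop_nhds_zero_nat (𝕜 := ℝ)).const_add 1
  have hshift := (h.comp (tendsto_add_atTop_nat 1)).rpow hexponent (.inr one_pos)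
  rw [Real.rpow_one] at hshift
  refine hshift.congr' ?_
  filter_upwards [eventually_ne_atTop 0] with n hn
  have hexp : 1 / ((n + 1 : ℕ) : ℝ) * (1 + 1 / n) = 1 / n := by
    push_cast
    field_simp
  rw [Function.comp_apply, ← Real.rpow_mul (ha _), hexp]

lemma tendsto_root_of_le_of_succ_le {C D : ℝ} (ha : ∀ n, 0 ≤ a n) (hb : ∀ n, 0 ≤ b n)
    (hC : 0 < C) (hD : 0 < D) (hab : ∀ n, a (n + 1) ≤ C * b n) (hba : ∀ n, b n ≤ D * a n)
    (h : Tendsto (fun n : ℕ ↦ a n ^ (1 / n : ℝ)) atTop (𝓝 L)) :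
    Tendsto (fun n : ℕ ↦ b n ^ (1 / n : ℝ)) atTop (𝓝 L) := by
  have hupper := tendsto_root_const_mul ha hD h
  have hlower : Tendsto (fun n : ℕ ↦ (C⁻¹ * a (n + 1)) ^ (1 / n : ℝ)) atTop (𝓝 L) :=
    tendsto_root_const_mul (fun n ↦ ha (n + 1)) (inv_pos.mpr hC) (tendsto_root_succ ha h)
  refine tendsto_of_tendsto_of_tendsto_of_le_of_le hlower hupper (fun n ↦ ?_) fun n ↦ ?_
  · have hle : C⁻¹ * a (n + 1) ≤ b n := (inv_mul_le_iff₀ hC).mpr (hab n)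
    exact Real.rpow_le_rpow (mul_nonneg (inv_nonneg.mpr hC.le) (ha _)) hle (by positivity)
  · exact Real.rpow_le_rpow (hb n) (hba n) (by positivity)

end RootLimits

section Gelfand

open Polynomial

/-- The seminorm `P ↦ ‖P(a)‖` on integer polynomials. It carries the powers of `a`, an element of a
possibly noncommutative ring, to a commutative ring, as `smoothingFun` requires. -/
noncomputable def aevalRingSeminorm {A : Type*} [SeminormedRing A] (a : A) : RingSeminorm ℤ[X] :=
  letI := SeminormedCommRing.induced ℤ[X] A (aeval a)
  normRingSeminorm ℤ[X]

lemma aevalRingSeminorm_apply {A : Type*} [SeminormedRing A] (a : A) (P : ℤ[X]) :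
    aevalRingSeminorm a P = ‖aeval a P‖ := rfl

lemma tendsto_norm_pow_root_iInf {A : Type*} [SeminormedRing A] (h_one : ‖(1 : A)‖ ≤ 1) (a : A) :
    Tendsto (fun n : ℕ ↦ ‖a ^ n‖ ^ (1 / n : ℝ)) atTop
      (𝓝 (⨅ n : ℕ, ‖a ^ (n + 1)‖ ^ (1 / (n + 1) : ℝ))) := by
  have hlim := tendsto_smoothingFun_of_map_one_le_one (aevalRingSeminorm a)
    (by rwa [aevalRingSeminorm_apply, map_one]) X
  have hinf : smoothingFun (aevalRingSeminorm a) X =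
      ⨅ n : ℕ, ‖a ^ (n + 1)‖ ^ (1 / (n + 1) : ℝ) :=
    (Equiv.pnatEquivNat.symm.iInf_congr fun n ↦ by simp [aevalRingSeminorm_apply]).symm
  rw [← hinf]
  refine hlim.congr fun n ↦ ?_
  rw [smoothingSeminormSeq, aevalRingSeminorm_apply, map_pow, aeval_X]

lemma tendsto_norm_pow_root_specRad {E : Type*} [NormedAddCommGroup E] [NormedSpace ℝ E]
    (K : E →L[ℝ] E) :
    Tendsto (fun n : ℕ ↦ ‖K ^ n‖ ^ (1 / n : ℝ)) atTop (𝓝 (specRad K)) :=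
  tendsto_norm_pow_root_iInf ContinuousLinearMap.norm_id_le K

end Gelfand

section NormedLattice

variable {E F G : Type*}
  [NormedAddCommGroup E] [NormedSpace ℝ E]
  [NormedAddCommGroup F] [NormedSpace ℝ F] [Lattice F]
  [NormedAddCommGroup G] [NormedSpace ℝ G] [Lattice G] [HasSolidNorm G]

lemma norm_map_le_of_abs_le {T : F →L[ℝ] G} (hT : Monotone T) {f g : F} (hfg : |f| ≤ g) :
    ‖T f‖ ≤ ‖T g‖ := by
  obtain ⟨hle, hneg⟩ := abs_le'.mp hfg
  have habs : |T f| ≤ T g := abs_le'.mpr ⟨hT hle, map_neg T f ▸ hT hneg⟩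
  exact norm_le_norm_of_abs_le_abs (habs.trans (le_abs_self _))

lemma opNorm_comp_le_of_abs_le_smul {T : F →L[ℝ] G} (hT : Monotone T) {S : E →L[ℝ] F} {e : F}
    {C : ℝ} (hC : 0 ≤ C) (hS : ∀ f, |S f| ≤ (C * ‖f‖) • e) :
    ‖T.comp S‖ ≤ C * ‖T e‖ := by
  refine ContinuousLinearMap.opNorm_le_bound _ (by positivity) fun f ↦ ?_
  calc ‖T (S f)‖ ≤ ‖T ((C * ‖f‖) • e)‖ := norm_map_le_of_abs_le hT (hS f)
    _ = C * ‖f‖ * ‖T e‖ := by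
      rw [map_smul, norm_smul, Real.norm_of_nonneg (by positivity)]
    _ = C * ‖T e‖ * ‖f‖ := by ring

lemma tendsto_norm_pow_apply_root_specRad {K : G →L[ℝ] G} (hmono : Monotone K) {e : G} {C : ℝ}
    (hC : 0 ≤ C) (hK : ∀ f, |K f| ≤ (C * ‖f‖) • e) :
    Tendsto (fun n : ℕ ↦ ‖(K ^ n) e‖ ^ (1 / n : ℝ)) atTop (𝓝 (specRad K)) := by
  have hpow_mono (n : ℕ) : Monotone (K ^ n) := by
    rw [FunLike.coe_pow_eq_iterate]
    exact hmono.iterate n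
  -- `C` and `‖e‖` may vanish; the `n`-th roots of the constants must tend to `1`.
  refine tendsto_root_of_le_of_succ_le (C := C + 1) (D := ‖e‖ + 1) (fun n ↦ norm_nonneg (K ^ n))
    (fun n ↦ norm_nonneg _) (by positivity) (by positivity) (fun n ↦ ?_) (fun n ↦ ?_)
    (tendsto_norm_pow_root_specRad K)
  · calc ‖K ^ (n + 1)‖ = ‖(K ^ n).comp K‖ := congrArg norm (pow_succ K n)
      _ ≤ C * ‖(K ^ n) e‖ := opNorm_comp_le_of_abs_le_smul (hpow_mono n) hC hK
      _ ≤ (C + 1) * ‖(K ^ n) e‖ := by gcongr; linarith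
  · calc ‖(K ^ n) e‖ ≤ ‖K ^ n‖ * ‖e‖ := (K ^ n).le_opNorm e
      _ ≤ (‖e‖ + 1) * ‖K ^ n‖ := by rw [mul_comm]; gcongr; linarith

end NormedLattice

section IntegralOperator

variable {X : Type*} [MeasurableSpace X] {π : Measure X} {p : ℝ≥0∞} [Fact (1 ≤ p)]

lemma integral_norm_le_mul_norm_Lp {E : Type*} [NormedAddCommGroup E] [IsFiniteMeasure π]
    (f : Lp E p π) :
    ∫ x, ‖f x‖ ∂π ≤ π.real Set.univ ^ (1 - 1 / p.toReal) * ‖f‖ := by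
  have hp : 1 ≤ p := Fact.out
  have hf := Lp.aestronglyMeasurable f
  have hle := eLpNorm_le_eLpNorm_mul_rpow_measure_univ hp hf
  have hexponent : 0 ≤ 1 / (1 : ℝ≥0∞).toReal - 1 / p.toReal := by
    simp only [one_div, ← ENNReal.toReal_inv, sub_nonneg]
    exact ENNReal.toReal_mono (by simp) (ENNReal.inv_le_inv.mpr hp)
  have htop : eLpNorm f p π * π Set.univ ^ (1 / (1 : ℝ≥0∞).toReal - 1 / p.toReal) ≠ ∞ :=
    ENNReal.mul_ne_top (Lp.eLpNorm_ne_top f)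
      (ENNReal.rpow_ne_top_of_nonneg hexponent (measure_ne_top _ _))
  calc ∫ x, ‖f x‖ ∂π = (eLpNorm f 1 π).toReal := by
        rw [integral_norm_eq_lintegral_enorm hf, eLpNorm_one_eq_lintegral_enorm]
    _ ≤ (eLpNorm f p π * π Set.univ ^ (1 / (1 : ℝ≥0∞).toReal - 1 / p.toReal)).toReal :=
        ENNReal.toReal_mono htop hle
    _ = π.real Set.univ ^ (1 - 1 / p.toReal) * ‖f‖ := by
        rw [ENNReal.toReal_mul, ← ENNReal.toReal_rpow, Lp.norm_def, mul_comm, toReal_one, div_one,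
          measureReal_def]

/-- `K` is the integral operator `(K g)(x) = ∫ h(x, y) g(y) dπ(y)` on `L_p(π)`. The kernel is taken
with respect to `π` itself, and the identity is required to hold `π`-almost everywhere. -/
def HasIntegralKernel (K : Lp ℝ p π →L[ℝ] Lp ℝ p π) (h : X → X → ℝ) : Prop :=
  ∀ g : Lp ℝ p π, K g =ᵐ[π] fun x ↦ ∫ y, h x y * g y ∂π

namespace HasIntegralKernel

variable {K : Lp ℝ p π →L[ℝ] Lp ℝ p π} {h : X → X → ℝ}

lemma monotone (hK : HasIntegralKernel K h) (h_nonneg : ∀ x y, 0 ≤ h x y) : Monotone K := by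
  refine (monotone_iff_map_nonneg K).mpr fun f hf ↦ ?_
  rw [← Lp.coeFn_nonneg] at hf ⊢
  filter_upwards [hK f] with x hx
  rw [hx]
  exact integral_nonneg_of_ae (hf.mono fun y hy ↦ mul_nonneg (h_nonneg x y) hy)

lemma abs_apply_le [IsFiniteMeasure π] (hK : HasIntegralKernel K h) {M : ℝ} (hM : 0 ≤ M)
    (h_le : ∀ x y, |h x y| ≤ M) (f : Lp ℝ p π) :
    |K f| ≤ (M * π.real Set.univ ^ (1 - 1 / p.toReal) * ‖f‖) • Lp.const p π (1 : ℝ) := by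
  rw [← Lp.coeFn_le]
  filter_upwards [Lp.coeFn_abs (K f), hK f, Lp.coeFn_const p π (1 : ℝ),
    Lp.coeFn_smul (M * π.real Set.univ ^ (1 - 1 / p.toReal) * ‖f‖) (Lp.const p π (1 : ℝ))]
    with x habs hKf hconst hsmul
  rw [habs, hKf, hsmul, Pi.smul_apply, hconst, Function.const_apply, smul_eq_mul, mul_one,
    ← Real.norm_eq_abs]
  calc ‖∫ y, h x y * f y ∂π‖ ≤ ∫ y, M * ‖f y‖ ∂π := by
        refine norm_integral_le_of_norm_le
          (((Lp.memLp f).integrable Fact.out).norm.const_mul M) (.of_forall fun y ↦ ?_)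
        rw [norm_mul]
        exact mul_le_mul_of_nonneg_right (h_le x y) (norm_nonneg _)
    _ = M * ∫ y, ‖f y‖ ∂π := integral_const_mul _ _
    _ ≤ M * (π.real Set.univ ^ (1 - 1 / p.toReal) * ‖f‖) :=
        mul_le_mul_of_nonneg_left (integral_norm_le_mul_norm_Lp f) hM
    _ = M * π.real Set.univ ^ (1 - 1 / p.toReal) * ‖f‖ := (mul_assoc _ _ _).symm

end HasIntegralKernel

lemma integral_div_withDensity_ofReal {μ : Measure X} {d : X → ℝ} (hd : Measurable d)
    (hd_pos : ∀ x, 0 < d x) (f : X → ℝ) :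
    ∫ y, f y / d y ∂μ.withDensity (fun x ↦ ENNReal.ofReal (d x)) = ∫ y, f y ∂μ := by
  rw [integral_withDensity_eq_integral_toReal_smul hd.ennreal_ofReal
    (.of_forall fun _ ↦ ENNReal.ofReal_lt_top)]
  refine integral_congr_ae (.of_forall fun y ↦ ?_)
  simp only [ENNReal.toReal_ofReal (hd_pos y).le, smul_eq_mul, mul_div_cancel₀ _ (hd_pos y).ne']

end IntegralOperator

theorem lim_norm_iterates_one_eq_specRad_general
    {X : Type*} [TopologicalSpace X] [CompactSpace X] [MeasurableSpace X] [OpensMeasurableSpace X]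
    (μ π : Measure X) [IsFiniteMeasure π]
    (d : X → ℝ) (hd_cont : Continuous d) (hd_pos : ∀ x, 0 < d x)
    (hπ : π = μ.withDensity (fun x ↦ ENNReal.ofReal (d x)))
    (p : ℝ≥0∞) [Fact (1 ≤ p)]
    (k : X → X → ℝ) (hk_cont : Continuous (Function.uncurry k)) (hk_nonneg : ∀ x y, 0 ≤ k x y)
    (K : Lp ℝ p π →L[ℝ] Lp ℝ p π)
    (hK : ∀ g : Lp ℝ p π, (K g : X → ℝ) =ᵐ[π] fun x ↦ ∫ y, k x y * g y ∂μ)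
    (one : Lp ℝ p π) (hone : (one : X → ℝ) =ᵐ[π] fun _ ↦ (1 : ℝ)) :
    Tendsto (fun n : ℕ ↦ ‖(K ^ n) one‖ ^ (1 / n : ℝ)) atTop (𝓝 (specRad K)) := by
  have hkernel : HasIntegralKernel K fun x y ↦ k x y / d y := fun g ↦ by
    filter_upwards [hK g] with x hx
    simp only [hx, div_mul_eq_mul_div, hπ,
      integral_div_withDensity_ofReal hd_cont.measurable hd_pos]
  have h_nonneg (x y : X) : 0 ≤ k x y / d y := div_nonneg (hk_nonneg x y) (hd_pos y).le
  have h_cont : Continuous fun z : X × X ↦ k z.1 z.2 / d z.2 :=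
    hk_cont.div (hd_cont.comp continuous_snd) fun z ↦ (hd_pos z.2).ne'
  obtain ⟨M, hM, h_le⟩ := (isCompact_range h_cont).bddAbove.exists_ge 0
  have h_abs_le (x y : X) : |k x y / d y| ≤ M :=
    (abs_of_nonneg (h_nonneg x y)).trans_le (h_le _ ⟨(x, y), rfl⟩)
  obtain rfl : one = Lp.const p π 1 := Lp.ext (hone.trans (Lp.coeFn_const p π 1).symm)
  exact tendsto_norm_pow_apply_root_specRad (hkernel.monotone h_nonneg) (by positivity)
    (hkernel.abs_apply_le hM h_abs_le)

/-- **Well-definedness of `Λ_p`.**  In the compact-state-space setting, with `𝟙`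
the constant function equal to `1` on `X` (an element of `L_p(X,π)` since `π`
is finite), the limit `lim_n ‖K^n 𝟙‖_p^(1/n)` exists and equals the spectral
radius `ρ(K)`; consequently `Λ_p = β ρ(K)^(1/θ)` is well defined. -/
theorem lim_norm_iterates_one_eq_specRad
    {X : Type*} [MetricSpace X] [CompactSpace X] [MeasurableSpace X] [BorelSpace X]
    (μ π : Measure X) [IsFiniteMeasure μ] [μ.IsOpenPosMeasure] [IsProbabilityMeasure π]
    (d : X → ℝ) (hd_cont : Continuous d) (hd_pos : ∀ x, 0 < d x)
    (hπ : π = μ.withDensity (fun x => ENNReal.ofReal (d x)))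
    (p : ℝ≥0∞) [Fact (1 ≤ p)] (hp_top : p ≠ ⊤)
    (k : X → X → ℝ) (hk_cont : Continuous (Function.uncurry k))
    (hk_pos : ∀ x y, 0 < k x y)
    (K : Lp ℝ p π →L[ℝ] Lp ℝ p π)
    (hK : ∀ g : Lp ℝ p π, (K g : X → ℝ) =ᵐ[π] fun x => ∫ y, k x y * g y ∂μ)
    (β θ : ℝ) (hβ0 : 0 < β) (hβ1 : β < 1) (hθ : θ ≠ 0)
    (one : Lp ℝ p π) (hone : (one : X → ℝ) =ᵐ[π] fun _ => (1 : ℝ)) :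
    Tendsto (fun n : ℕ => ‖(K ^ n) one‖ ^ (1 / n : ℝ)) atTop (𝓝 (specRad K)) :=
  lim_norm_iterates_one_eq_specRad_general μ π d hd_cont hd_pos hπ p k hk_cont
    (fun x y ↦ (hk_pos x y).le) K hK one hone
end

section
/- If Λ_p = β ρ(K)^{1/θ} < 1, then the narrow-framing operator B has a fixed point g* ∈ L_p(X,π)_+, and B is globally stable in the sense that ‖B^n g − g*‖_p → 0 as n → ∞ for every g ∈ L_p(X,π)_+. -/
open MeasureTheory Filter Topology ENNReal

/-!
The scalar aggregator `φ t = ((1 - β) + β t^(1/θ))^θ` is increasing on `(0, ∞)` with slope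
`φ' t = β ((1 - β) t^(-1/θ) + β)^(θ - 1)`. For `0 < θ < 1` the slope is at most `β^θ`, so `B` is
dominated by the positive linear operator `β^θ K`, whose powers are summable because
`β^θ ρ(K) < 1`. For `θ < 0` or `θ ≥ 1` the slope is decreasing, so `φ` is concave, and `B` maps
the cone above a constant `w > 0` with `B (t g) ≥ t B g + (1 - t) w`: once two orbits lie below
`a w`, the factor `t` with `t Bⁿ g ≤ Bⁿ h` improves geometrically. The orbits are bounded because
`φ t ≤ C + r t` with `r ρ(K) < 1`, so that the Neumann series of `r K` gives `v` with `B v ≤ v`.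
In both regimes distances between orbits are summable, and a Weissinger-type fixed point theorem
applies.
-/

section FixedPoint

open Set

theorem exists_fixedPoint_of_summable_dist_iterate {α : Type*} [MetricSpace α] {f : α → α}
    {s t : Set α} (ht : IsComplete t) (ht_ne : t.Nonempty) (hts : t ⊆ s) (hf : MapsTo f s t)
    (hcont : ContinuousOn f t)
    (hdist : ∀ x ∈ s, ∀ y ∈ s, Summable fun n => dist (f^[n] x) (f^[n] y)) :
    ∃ z ∈ t, f z = z ∧ ∀ x ∈ s, Tendsto (fun n => f^[n] x) atTop (𝓝 z) := by
  obtain ⟨x, hx⟩ := ht_ne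
  have hmem : ∀ n, f^[n] x ∈ t := fun n => (hf.mono_left hts).iterate n hx
  have hcauchy : CauchySeq fun n => f^[n] x := by
    refine cauchySeq_of_summable_dist ?_
    simpa only [Function.iterate_succ_apply] using hdist x (hts hx) (f x) (hts (hf (hts hx)))
  obtain ⟨z, hz, hxz⟩ := cauchySeq_tendsto_of_isComplete ht hmem hcauchy
  have hfix : f z = z := by
    have hfz : Tendsto (fun n => f (f^[n] x)) atTop (𝓝 (f z)) :=
      (hcont z hz).tendsto.comp
        (tendsto_nhdsWithin_iff.2 ⟨hxz, Eventually.of_forall hmem⟩)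
    simp only [← Function.iterate_succ_apply' f] at hfz
    exact tendsto_nhds_unique hfz ((tendsto_add_atTop_iff_nat 1).2 hxz)
  refine ⟨z, hz, hfix, fun y hy => tendsto_iff_dist_tendsto_zero.2 ?_⟩
  simpa only [Function.iterate_fixed hfix] using (hdist y hy z (hts hz)).tendsto_atTop_zero

end FixedPoint

section SpectralRadius

theorem summable_norm_pow_of_norm_pow_lt_one {R : Type*} [SeminormedRing R] {x : R} {N : ℕ}
    (hN : N ≠ 0) (hx : ‖x ^ N‖ < 1) : Summable fun n => ‖x ^ n‖ := by
  have : NeZero N := ⟨hN⟩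
  rw [← (Nat.divModEquiv N).symm.summable_iff]
  have hprod : Summable fun i : ℕ × Fin N => ‖x ^ N‖ ^ i.1 * ‖x ^ (i.2 : ℕ)‖ :=
    (summable_geometric_of_lt_one (norm_nonneg _) hx).mul_of_nonneg
      (g := fun j : Fin N => ‖x ^ (j : ℕ)‖) .of_finite
      (fun _ => pow_nonneg (norm_nonneg _) _) (fun _ => norm_nonneg _)
  refine hprod.of_nonneg_of_le (fun _ => norm_nonneg _) ?_
  rintro ⟨q, j⟩
  have hqj : (Nat.divModEquiv N).symm (q, j) = N * q + j := by
    simp [Nat.divModEquiv, mul_comm]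
  simp only [Function.comp_apply, hqj, pow_add, pow_mul]
  rcases Nat.eq_zero_or_pos q with rfl | hq
  · simp
  · exact (norm_mul_le _ _).trans (by gcongr; exact norm_pow_le' _ hq)

variable {E : Type*} [NormedAddCommGroup E] [NormedSpace ℝ E] {K : E →L[ℝ] E}

theorem specRad_nonneg (K : E →L[ℝ] E) : 0 ≤ specRad K :=
  Real.iInf_nonneg fun _ => by positivity

theorem exists_norm_pow_lt_of_specRad_lt {c : ℝ} (hc : specRad K < c) :
    ∃ n : ℕ, ‖K ^ (n + 1)‖ < c ^ (n + 1) := by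
  obtain ⟨n, hn⟩ := exists_lt_of_ciInf_lt hc
  refine ⟨n, ?_⟩
  have hpow := Real.rpow_lt_rpow (by positivity) hn (z := (n : ℝ) + 1) (by positivity)
  rw [← Real.rpow_mul (norm_nonneg _), one_div_mul_cancel (by positivity), Real.rpow_one] at hpow
  exact_mod_cast hpow

theorem summable_norm_pow_smul_of_specRad_lt {r : ℝ} (hr : 0 < r) (hK : specRad K < r⁻¹) :
    Summable fun n => ‖(r • K) ^ n‖ := by
  obtain ⟨n, hn⟩ := exists_norm_pow_lt_of_specRad_lt hK
  refine summable_norm_pow_of_norm_pow_lt_one n.succ_ne_zero ?_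
  rw [smul_pow, norm_smul, norm_pow, Real.norm_of_nonneg hr.le]
  calc r ^ (n + 1) * ‖K ^ (n + 1)‖
      < r ^ (n + 1) * r⁻¹ ^ (n + 1) := by gcongr
    _ = 1 := by rw [← mul_pow, mul_inv_cancel₀ hr.ne', one_pow]

theorem specRad_lt_inv_rpow {β θ : ℝ} (hβ : 0 < β) (hθ : 0 < θ)
    (hΛ : β * specRad K ^ (1 / θ) < 1) : specRad K < (β ^ θ)⁻¹ := by
  have hroot : specRad K ^ (1 / θ) < β⁻¹ := by
    rwa [← one_div, lt_div_iff₀' hβ]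
  have hpow := Real.rpow_lt_rpow (Real.rpow_nonneg (specRad_nonneg K) _) hroot hθ
  rwa [← Real.rpow_mul (specRad_nonneg K), one_div_mul_cancel hθ.ne', Real.rpow_one,
    Real.inv_rpow hβ.le] at hpow

end SpectralRadius

section OrderedFixedPoint

open Set

variable {E : Type*} [NormedAddCommGroup E] [Lattice E] [HasSolidNorm E] [IsOrderedAddMonoid E]
  [NormedSpace ℝ E]

theorem exists_le_eq_add_apply_of_summable_norm_pow [CompleteSpace E] {L : E →L[ℝ] E}
    (hL : Monotone L) (hsum : Summable fun n => ‖L ^ n‖) {w : E} (hw : 0 ≤ w) :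
    ∃ v, w ≤ v ∧ v = w + L v := by
  have hsum_w : Summable fun n => (L ^ n) w :=
    .of_norm_bounded (hsum.mul_right ‖w‖) fun n => (L ^ n).le_opNorm w
  have hnonneg : ∀ n, 0 ≤ (L ^ n) w := fun n => by
    simpa using hL.iterate n hw
  have heq : ∑' n, (L ^ n) w = w + L (∑' n, (L ^ n) w) := by
    rw [L.map_tsum hsum_w, hsum_w.tsum_eq_zero_add]
    simp [pow_succ']
  exact ⟨_, by simpa using hsum_w.le_tsum 0 fun n _ => hnonneg n, heq⟩

section LinearDomination

variable {L : E →L[ℝ] E} {C : Set E} {B : E → E}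

theorem norm_iterate_sub_iterate_le (hL : Monotone L) (hBC : MapsTo B C C)
    (hB : ∀ g ∈ C, ∀ h ∈ C, |B g - B h| ≤ L |g - h|) {g h : E} (hg : g ∈ C) (hh : h ∈ C)
    (n : ℕ) : ‖B^[n] g - B^[n] h‖ ≤ ‖L ^ n‖ * ‖g - h‖ := by
  have habs : |B^[n] g - B^[n] h| ≤ (L ^ n) |g - h| := by
    induction n with
    | zero => simp
    | succ n ih =>
      rw [Function.iterate_succ_apply', Function.iterate_succ_apply', pow_succ']
      exact (hB _ (hBC.iterate n hg) _ (hBC.iterate n hh)).trans (hL ih)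
  calc ‖B^[n] g - B^[n] h‖
      ≤ ‖(L ^ n) |g - h|‖ := norm_le_norm_of_abs_le_abs (habs.trans (le_abs_self _))
    _ ≤ ‖L ^ n‖ * ‖g - h‖ := by simpa only [norm_abs_eq_norm] using (L ^ n).le_opNorm |g - h|

theorem exists_fixedPoint_of_abs_sub_le_apply [CompleteSpace E] (hL : Monotone L)
    (hsum : Summable fun n => ‖L ^ n‖) {w : E} (hwC : Ici w ⊆ C) (hBw : ∀ g ∈ C, w ≤ B g)
    (hB_cont : ContinuousOn B C) (hB : ∀ g ∈ C, ∀ h ∈ C, |B g - B h| ≤ L |g - h|) :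
    ∃ z ∈ C, B z = z ∧ ∀ g ∈ C, Tendsto (fun n => B^[n] g) atTop (𝓝 z) := by
  have hBC : MapsTo B C C := fun g hg => hwC (hBw g hg)
  obtain ⟨z, hz, hfix, htendsto⟩ := exists_fixedPoint_of_summable_dist_iterate
    isClosed_Ici.isComplete nonempty_Ici hwC hBw (hB_cont.mono hwC) fun g hg h hh =>
      (hsum.mul_right ‖g - h‖).of_nonneg_of_le (fun _ => dist_nonneg) fun n => by
        rw [dist_eq_norm]; exact norm_iterate_sub_iterate_le hL hBC hB hg hh n
  exact ⟨z, hwC hz, hfix, htendsto⟩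

end LinearDomination

end OrderedFixedPoint

section FloorConcave

open Set

/-- An increasing self-map `B` of a set `C` closed under positive scaling that lies above a
*floor* `w` and is concave along rays with the floor standing in for its value at `0`, while its
values are bounded by multiples of the floor: the hypotheses under which orbits of `B` attract
each other in order. -/
structure FloorConcaveOn {E : Type*} [AddCommGroup E] [PartialOrder E] [Module ℝ E]
    (C : Set E) (w : E) (B : E → E) : Prop where
  Ici_subset : Ici w ⊆ C
  smul_mem : ∀ t : ℝ, 0 < t → ∀ g ∈ C, t • g ∈ C
  floor_nonneg : 0 ≤ w
  floor_le_map : ∀ g ∈ C, w ≤ B g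
  monotoneOn : MonotoneOn B C
  smul_add_le_map : ∀ g ∈ C, ∀ t : ℝ, 0 < t → t ≤ 1 → t • B g + (1 - t) • w ≤ B (t • g)
  exists_map_le_smul_floor : ∀ g ∈ C, ∃ a : ℝ, B g ≤ a • w

namespace FloorConcaveOn

section OrderedModule

variable {E : Type*} [AddCommGroup E] [PartialOrder E] [Module ℝ E] {C : Set E} {w : E}
  {B : E → E} {a : ℝ} {g h v : E}

theorem mapsTo (hB : FloorConcaveOn C w B) : MapsTo B C C :=
  fun g hg => hB.Ici_subset (hB.floor_le_map g hg)

theorem floor_le_iterate_succ (hB : FloorConcaveOn C w B) (hg : g ∈ C) (n : ℕ) :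
    w ≤ B^[n + 1] g := by
  rw [Function.iterate_succ_apply']
  exact hB.floor_le_map _ (hB.mapsTo.iterate n hg)

theorem iterate_le_of_map_le (hB : FloorConcaveOn C w B) (hg : g ∈ C) (hv : v ∈ C)
    (hBv : B v ≤ v) (hgv : g ≤ v) (n : ℕ) : B^[n] g ≤ v := by
  induction n with
  | zero => exact hgv
  | succ n ih =>
    rw [Function.iterate_succ_apply']
    exact (hB.monotoneOn (hB.mapsTo.iterate n hg) hv ih).trans hBv

variable [IsOrderedAddMonoid E] [IsOrderedModule ℝ E]

theorem smul_map_le_map (hB : FloorConcaveOn C w B) (hg : g ∈ C) (hh : h ∈ C) (ha : 0 < a)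
    (hga : B g ≤ a • w) {t : ℝ} (ht₀ : 0 < t) (ht₁ : t ≤ 1) (hle : t • g ≤ h) :
    (1 - (1 - a⁻¹) * (1 - t)) • B g ≤ B h := by
  have hfloor : a⁻¹ • B g ≤ w := (inv_smul_le_iff_of_pos ha).2 hga
  calc (1 - (1 - a⁻¹) * (1 - t)) • B g
      = t • B g + (1 - t) • a⁻¹ • B g := by rw [smul_smul, ← add_smul]; congr 1; ring
    _ ≤ t • B g + (1 - t) • w := by gcongr
    _ ≤ B (t • g) := hB.smul_add_le_map g hg t ht₀ ht₁
    _ ≤ B h := hB.monotoneOn (hB.smul_mem t ht₀ g hg) hh hle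

theorem map_smul_le_smul (hB : FloorConcaveOn C w B) (hv : v ∈ C) (hBv : B v ≤ v) {s : ℝ}
    (hs : 1 ≤ s) : B (s • v) ≤ s • v := by
  have hs₀ : 0 < s := one_pos.trans_le hs
  have hconc := hB.smul_add_le_map (s • v) (hB.smul_mem s hs₀ v hv) s⁻¹ (inv_pos.2 hs₀)
    (inv_le_one_of_one_le₀ hs)
  rw [inv_smul_smul₀ hs₀.ne'] at hconc
  have hrest : 0 ≤ (1 - s⁻¹) • w :=
    smul_nonneg (sub_nonneg.2 (inv_le_one_of_one_le₀ hs)) hB.floor_nonneg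
  rw [← inv_smul_le_iff_of_pos hs₀]
  exact (le_add_of_nonneg_right hrest).trans (hconc.trans hBv)

theorem exists_iterate_succ_le_smul_floor (hB : FloorConcaveOn C w B) (hv : v ∈ C)
    (hBv : B v ≤ v) (hg : g ∈ C) : ∃ a : ℝ, ∀ n, B^[n + 1] g ≤ a • w := by
  obtain ⟨a, ha⟩ := hB.exists_map_le_smul_floor g hg
  obtain ⟨c, hc⟩ := hB.exists_map_le_smul_floor v hv
  set s := max a 1
  have hs : 0 ≤ s := zero_le_one.trans (le_max_right _ _)
  have hBv_mem : B v ∈ C := hB.mapsTo hv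
  have hsup : B (s • B v) ≤ s • B v :=
    hB.map_smul_le_smul hBv_mem (hB.monotoneOn hBv_mem hv hBv) (le_max_right _ _)
  have hstart : B g ≤ s • B v := calc
    B g ≤ a • w := ha
    _ ≤ s • w := smul_le_smul_of_nonneg_right (le_max_left _ _) hB.floor_nonneg
    _ ≤ s • B v := smul_le_smul_of_nonneg_left (hB.floor_le_map v hv) hs
  refine ⟨s * c, fun n => ?_⟩
  rw [Function.iterate_succ_apply, mul_smul]
  exact (hB.iterate_le_of_map_le (hB.mapsTo hg)
    (hB.smul_mem s (one_pos.trans_le (le_max_right _ _)) _ hBv_mem) hsup hstart n).trans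
    (smul_le_smul_of_nonneg_left hc hs)

theorem one_sub_pow_smul_iterate_le (hB : FloorConcaveOn C w B) (hg : g ∈ C) (hh : h ∈ C)
    (ha : 1 ≤ a) (hga : ∀ n, B^[n + 1] g ≤ a • w) (n : ℕ) :
    (1 - (1 - a⁻¹) ^ (n + 1)) • B^[n + 1] g ≤ B^[n + 1] h := by
  have ha₀ : 0 < a := one_pos.trans_le ha
  have hq₀ : 0 ≤ 1 - a⁻¹ := sub_nonneg.2 (inv_le_one_of_one_le₀ ha)
  have hq₁ : 1 - a⁻¹ < 1 := sub_lt_self _ (inv_pos.2 ha₀)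
  induction n with
  | zero =>
    rw [zero_add, pow_one, _root_.sub_sub_cancel, inv_smul_le_iff_of_pos ha₀]
    exact (hga 0).trans (smul_le_smul_of_nonneg_left (hB.floor_le_iterate_succ hh 0) ha₀.le)
  | succ n ih =>
    have hstep := hB.smul_map_le_map (hB.mapsTo.iterate (n + 1) hg)
      (hB.mapsTo.iterate (n + 1) hh) ha₀
      (by simpa only [Function.iterate_succ_apply'] using hga (n + 1))
      (sub_pos.2 (pow_lt_one₀ hq₀ hq₁ n.succ_ne_zero))
      (sub_le_self _ (pow_nonneg hq₀ _)) ih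
    rwa [_root_.sub_sub_cancel, ← pow_succ', ← Function.iterate_succ_apply' B,
      ← Function.iterate_succ_apply' B] at hstep

theorem iterate_sub_iterate_le (hB : FloorConcaveOn C w B) (hg : g ∈ C) (hh : h ∈ C)
    (ha : 1 ≤ a) (hga : ∀ n, B^[n + 1] g ≤ a • w) (n : ℕ) :
    B^[n + 1] g - B^[n + 1] h ≤ ((1 - a⁻¹) ^ (n + 1) * a) • w := by
  have hle := hB.one_sub_pow_smul_iterate_le hg hh ha hga n
  rw [sub_smul, one_smul, sub_le_comm] at hle
  rw [mul_smul]
  exact hle.trans (smul_le_smul_of_nonneg_left (hga n)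
    (pow_nonneg (sub_nonneg.2 (inv_le_one_of_one_le₀ ha)) _))

end OrderedModule

section NormedLattice

variable {E : Type*} [NormedAddCommGroup E] [Lattice E] [HasSolidNorm E] [IsOrderedAddMonoid E]
  [NormedSpace ℝ E] [IsOrderedModule ℝ E] {C : Set E} {w : E} {B : E → E} {a : ℝ} {g h v : E}

theorem dist_iterate_succ_le (hB : FloorConcaveOn C w B) (hg : g ∈ C) (hh : h ∈ C) (ha : 1 ≤ a)
    (hga : ∀ n, B^[n + 1] g ≤ a • w) (hha : ∀ n, B^[n + 1] h ≤ a • w) (n : ℕ) :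
    dist (B^[n + 1] g) (B^[n + 1] h) ≤ (1 - a⁻¹) ^ (n + 1) * (a * ‖w‖) := by
  have habs : |B^[n + 1] g - B^[n + 1] h| ≤ ((1 - a⁻¹) ^ (n + 1) * a) • w := abs_le'.2
    ⟨hB.iterate_sub_iterate_le hg hh ha hga n,
      (neg_sub _ _).trans_le (hB.iterate_sub_iterate_le hh hg ha hha n)⟩
  have hcoeff : 0 ≤ (1 - a⁻¹) ^ (n + 1) * a := mul_nonneg
    (pow_nonneg (sub_nonneg.2 (inv_le_one_of_one_le₀ ha)) _) (zero_le_one.trans ha)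
  calc dist (B^[n + 1] g) (B^[n + 1] h)
      ≤ ‖((1 - a⁻¹) ^ (n + 1) * a) • w‖ := by
        rw [dist_eq_norm]; exact norm_le_norm_of_abs_le_abs (habs.trans (le_abs_self _))
    _ = (1 - a⁻¹) ^ (n + 1) * (a * ‖w‖) := by
        rw [norm_smul, Real.norm_of_nonneg hcoeff, mul_assoc]

theorem summable_dist_iterate (hB : FloorConcaveOn C w B) (hv : v ∈ C) (hBv : B v ≤ v)
    (hg : g ∈ C) (hh : h ∈ C) : Summable fun n => dist (B^[n] g) (B^[n] h) := by
  obtain ⟨a, ha⟩ := hB.exists_iterate_succ_le_smul_floor hv hBv hg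
  obtain ⟨c, hc⟩ := hB.exists_iterate_succ_le_smul_floor hv hBv hh
  set e := max 1 (max a c)
  have he : 1 ≤ e := le_max_left _ _
  have hge : ∀ n, B^[n + 1] g ≤ e • w := fun n => (ha n).trans
    (smul_le_smul_of_nonneg_right ((le_max_left a c).trans (le_max_right _ _)) hB.floor_nonneg)
  have hhe : ∀ n, B^[n + 1] h ≤ e • w := fun n => (hc n).trans
    (smul_le_smul_of_nonneg_right ((le_max_right a c).trans (le_max_right _ _)) hB.floor_nonneg)
  have hgeom : Summable fun n => (1 - e⁻¹) ^ n * (e * ‖w‖) :=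
    (summable_geometric_of_lt_one (sub_nonneg.2 (inv_le_one_of_one_le₀ he))
      (sub_lt_self _ (inv_pos.2 (one_pos.trans_le he)))).mul_right _
  exact (summable_nat_add_iff 1).1 (.of_nonneg_of_le (fun _ => dist_nonneg)
    (hB.dist_iterate_succ_le hg hh he hge hhe) ((summable_nat_add_iff 1).2 hgeom))

theorem exists_fixedPoint [CompleteSpace E] (hB : FloorConcaveOn C w B)
    (hB_cont : ContinuousOn B C) (hv : v ∈ C) (hBv : B v ≤ v) :
    ∃ z ∈ C, B z = z ∧ ∀ g ∈ C, Tendsto (fun n => B^[n] g) atTop (𝓝 z) := by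
  obtain ⟨z, hz, hfix, htendsto⟩ := exists_fixedPoint_of_summable_dist_iterate
    isClosed_Ici.isComplete nonempty_Ici hB.Ici_subset hB.floor_le_map
    (hB_cont.mono hB.Ici_subset) fun g hg h hh => hB.summable_dist_iterate hv hBv hg hh
  exact ⟨z, hB.Ici_subset hz, hfix, htendsto⟩

end NormedLattice

end FloorConcaveOn

end FloorConcave

/-- The scalar aggregator `φ` of the narrow-framing operator, `B g = φ (K g + b)`. It is only
meaningful for `t > 0`, where `t ^ (1 / θ)` is a genuine real power. -/
noncomputable def aggregator (β θ t : ℝ) : ℝ := ((1 - β) + β * t ^ (1 / θ)) ^ θ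

/-- The derivative of `aggregator β θ` on `(0, ∞)`. The factor `t ^ (1 / θ - 1)` produced by the
chain rule has been absorbed into the bracket, which makes monotonicity in `t` visible. -/
noncomputable def aggregatorSlope (β θ t : ℝ) : ℝ :=
  β * ((1 - β) * t ^ (-(1 / θ)) + β) ^ (θ - 1)

section Aggregator

open Set

variable {β θ : ℝ}

theorem aggregator_pos (hβ₀ : 0 < β) (hβ₁ : β < 1) {t : ℝ} (ht : 0 < t) :
    0 < aggregator β θ t := by
  have : 0 < 1 - β := sub_pos.2 hβ₁
  unfold aggregator
  positivity

theorem aggregatorSlope_nonneg (hβ₀ : 0 < β) (hβ₁ : β < 1) {t : ℝ} (ht : 0 < t) :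
    0 ≤ aggregatorSlope β θ t := by
  have : 0 < 1 - β := sub_pos.2 hβ₁
  unfold aggregatorSlope
  positivity

theorem hasDerivAt_aggregator (hβ₀ : 0 < β) (hβ₁ : β < 1) (hθ : θ ≠ 0) {t : ℝ} (ht : 0 < t) :
    HasDerivAt (aggregator β θ) (aggregatorSlope β θ t) t := by
  have : 0 < 1 - β := sub_pos.2 hβ₁
  have hbase : 0 < (1 - β) + β * t ^ (1 / θ) := by positivity
  have hchain : HasDerivAt (aggregator β θ) _ t :=
    (((Real.hasDerivAt_rpow_const (.inl ht.ne')).const_mul β).const_add (1 - β)).rpow_const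
      (p := θ) (.inl hbase.ne')
  convert hchain using 1
  have hfactor : (1 - β) * t ^ (-(1 / θ)) + β
      = ((1 - β) + β * t ^ (1 / θ)) * t ^ (-(1 / θ)) := by
    rw [add_mul, mul_assoc β, ← Real.rpow_add ht]
    simp
  have hexp : -(1 / θ) * (θ - 1) = 1 / θ - 1 := by field_simp; ring
  rw [aggregatorSlope, hfactor, Real.mul_rpow hbase.le (by positivity), ← Real.rpow_mul ht.le,
    hexp]
  field_simp

theorem monotoneOn_aggregator (hβ₀ : 0 < β) (hβ₁ : β < 1) (hθ : θ ≠ 0) :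
    MonotoneOn (aggregator β θ) (Ioi 0) :=
  monotoneOn_of_hasDerivWithinAt_nonneg (convex_Ioi 0)
    (fun _ ht => (hasDerivAt_aggregator hβ₀ hβ₁ hθ ht).continuousAt.continuousWithinAt)
    (fun _ ht => (hasDerivAt_aggregator hβ₀ hβ₁ hθ (interior_subset ht)).hasDerivWithinAt)
    (fun _ ht => aggregatorSlope_nonneg hβ₀ hβ₁ (interior_subset ht))

theorem abs_aggregator_sub_le (hβ₀ : 0 < β) (hβ₁ : β < 1) (hθ : θ ≠ 0) {m c : ℝ} (hm : 0 < m)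
    (hc : ∀ t, m ≤ t → aggregatorSlope β θ t ≤ c) {s t : ℝ} (hs : m ≤ s) (ht : m ≤ t) :
    |aggregator β θ s - aggregator β θ t| ≤ c * |s - t| := by
  refine (convex_Ici m).norm_image_sub_le_of_norm_hasDerivWithin_le (f' := aggregatorSlope β θ)
    (fun x hx => (hasDerivAt_aggregator hβ₀ hβ₁ hθ (hm.trans_le hx)).hasDerivWithinAt)
    (fun x hx => ?_) ht hs
  rw [Real.norm_of_nonneg (aggregatorSlope_nonneg hβ₀ hβ₁ (hm.trans_le hx))]
  exact hc x hx

theorem aggregatorSlope_le_rpow (hβ₀ : 0 < β) (hβ₁ : β < 1) (hθ : θ ≤ 1) {t : ℝ} (ht : 0 < t) :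
    aggregatorSlope β θ t ≤ β ^ θ := by
  have : 0 < 1 - β := sub_pos.2 hβ₁
  calc aggregatorSlope β θ t
      ≤ β * β ^ (θ - 1) := by
        refine mul_le_mul_of_nonneg_left ?_ hβ₀.le
        exact Real.rpow_le_rpow_of_nonpos hβ₀ (le_add_of_nonneg_left (by positivity))
          (sub_nonpos.2 hθ)
    _ = β ^ θ := by rw [Real.rpow_sub_one hβ₀.ne', mul_div_cancel₀ _ hβ₀.ne']

theorem antitoneOn_aggregatorSlope (hβ₀ : 0 < β) (hβ₁ : β < 1) (hθ : θ < 0 ∨ 1 ≤ θ) :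
    AntitoneOn (aggregatorSlope β θ) (Ioi 0) := by
  intro s hs t ht hst
  have hs : 0 < s := hs
  have ht : 0 < t := ht
  have : 0 < 1 - β := sub_pos.2 hβ₁
  refine mul_le_mul_of_nonneg_left ?_ hβ₀.le
  rcases hθ with hneg | hone
  · have hpow : s ^ (-(1 / θ)) ≤ t ^ (-(1 / θ)) :=
      Real.rpow_le_rpow hs.le hst (neg_nonneg.2 (one_div_neg.2 hneg).le)
    exact Real.rpow_le_rpow_of_nonpos (by positivity) (by gcongr) (by linarith)
  · have hpow : t ^ (-(1 / θ)) ≤ s ^ (-(1 / θ)) :=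
      Real.rpow_le_rpow_of_nonpos hs hst
        (neg_nonpos.2 (one_div_nonneg.2 (zero_le_one.trans hone)))
    exact Real.rpow_le_rpow (by positivity) (by gcongr) (sub_nonneg.2 hone)

theorem exists_aggregatorSlope_le (hβ₀ : 0 < β) (hβ₁ : β < 1) {m : ℝ} (hm : 0 < m) :
    ∃ c, ∀ t, m ≤ t → aggregatorSlope β θ t ≤ c := by
  rcases le_total θ 1 with hθ | hθ
  · exact ⟨β ^ θ, fun t ht => aggregatorSlope_le_rpow hβ₀ hβ₁ hθ (hm.trans_le ht)⟩
  · exact ⟨aggregatorSlope β θ m, fun t ht =>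
      antitoneOn_aggregatorSlope hβ₀ hβ₁ (.inr hθ) hm (hm.trans_le ht) ht⟩

theorem concaveOn_aggregator (hβ₀ : 0 < β) (hβ₁ : β < 1) (hθ : θ < 0 ∨ 1 ≤ θ) :
    ConcaveOn ℝ (Ioi 0) (aggregator β θ) := by
  have hθ₀ : θ ≠ 0 := hθ.elim LT.lt.ne fun h => (one_pos.trans_le h).ne'
  have hderiv : ∀ t ∈ Ioi (0 : ℝ), HasDerivAt (aggregator β θ) (aggregatorSlope β θ t) t :=
    fun t ht => hasDerivAt_aggregator hβ₀ hβ₁ hθ₀ ht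
  refine AntitoneOn.concaveOn_of_deriv (convex_Ioi 0)
    (fun t ht => (hderiv t ht).continuousAt.continuousWithinAt) ?_ ?_ <;> rw [interior_Ioi]
  · exact fun t ht => (hderiv t ht).differentiableAt.differentiableWithinAt
  · exact (antitoneOn_aggregatorSlope hβ₀ hβ₁ hθ).congr fun t ht => (hderiv t ht).deriv.symm

theorem aggregator_le_of_neg (hβ₀ : 0 < β) (hβ₁ : β < 1) (hθ : θ < 0) {t : ℝ} (ht : 0 < t) :
    aggregator β θ t ≤ (1 - β) ^ θ :=
  Real.rpow_le_rpow_of_nonpos (sub_pos.2 hβ₁) (le_add_of_nonneg_right (by positivity)) hθ.le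

theorem tendsto_aggregatorSlope_atTop (hβ₀ : 0 < β) (hθ : 0 < θ) :
    Tendsto (aggregatorSlope β θ) atTop (𝓝 (β ^ θ)) := by
  have hpow : Tendsto (fun t : ℝ => (1 - β) * t ^ (-(1 / θ)) + β) atTop (𝓝 β) := by
    simpa using ((tendsto_rpow_neg_atTop (one_div_pos.2 hθ)).const_mul (1 - β)).add_const β
  have hlim := (hpow.rpow_const (p := θ - 1) (.inl hβ₀.ne')).const_mul β
  rwa [Real.rpow_sub_one hβ₀.ne', mul_div_cancel₀ _ hβ₀.ne'] at hlim

theorem exists_aggregator_le_add_mul (hβ₀ : 0 < β) (hβ₁ : β < 1) (hθ : 0 < θ) {r : ℝ}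
    (hr : β ^ θ < r) : ∃ c, 0 < c ∧ ∀ t, 0 < t → aggregator β θ t ≤ c + r * t := by
  have hr₀ : 0 < r := (Real.rpow_pos_of_pos hβ₀ θ).trans hr
  obtain ⟨T, hT₀, hT⟩ : ∃ T > 0, ∀ t ≥ T, aggregatorSlope β θ t ≤ r :=
    ((eventually_gt_atTop 0).and (eventually_forall_ge_atTop.2
      ((tendsto_aggregatorSlope_atTop hβ₀ hθ).eventually_le_const hr))).exists
  refine ⟨aggregator β θ T, aggregator_pos hβ₀ hβ₁ hT₀, fun t ht => ?_⟩
  rcases le_total t T with htT | hTt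
  · exact (monotoneOn_aggregator hβ₀ hβ₁ hθ.ne' ht hT₀ htT).trans
      (le_add_of_nonneg_right (by positivity))
  · have hlip := (le_abs_self _).trans (abs_aggregator_sub_le hβ₀ hβ₁ hθ.ne' hT₀ hT hTt le_rfl)
    rw [abs_of_nonneg (sub_nonneg.2 hTt)] at hlip
    nlinarith

end Aggregator

section Lp

open Set

variable {X : Type*} [MeasurableSpace X] {π : Measure X} {p : ℝ≥0∞}

instance isOrderedModule_Lp : IsOrderedModule ℝ (Lp ℝ p π) := by
  refine .of_smul_nonneg fun a ha f hf => ?_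
  rw [← Lp.coeFn_nonneg] at hf ⊢
  filter_upwards [hf, Lp.coeFn_smul a f] with x hfx hax
  rw [hax]
  exact mul_nonneg ha hfx

/-- The cone `L_p(X, π)_+` of almost everywhere strictly positive functions. -/
def posCone (π : Measure X) (p : ℝ≥0∞) : Set (Lp ℝ p π) := {g | ∀ᵐ x ∂π, 0 < g x}

theorem nonneg_of_mem_posCone {g : Lp ℝ p π} (hg : g ∈ posCone π p) : 0 ≤ g :=
  (Lp.coeFn_nonneg g).1 (by filter_upwards [hg] with x hx using hx.le)

theorem smul_mem_posCone {t : ℝ} (ht : 0 < t) {g : Lp ℝ p π} (hg : g ∈ posCone π p) :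
    t • g ∈ posCone π p := by
  filter_upwards [hg, Lp.coeFn_smul t g] with x hgx htx
  rw [htx]
  exact mul_pos ht hgx

section Const

variable [IsFiniteMeasure π] {c : ℝ} {g : Lp ℝ p π}

theorem const_le_of_ae_le (h : ∀ᵐ x ∂π, c ≤ g x) : Lp.const p π c ≤ g := by
  rw [← Lp.coeFn_le]
  filter_upwards [h, Lp.coeFn_const p π c] with x hx hcx
  rwa [hcx]

theorem le_const_of_ae_le (h : ∀ᵐ x ∂π, g x ≤ c) : g ≤ Lp.const p π c := by
  rw [← Lp.coeFn_le]
  filter_upwards [h, Lp.coeFn_const p π c] with x hx hcx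
  rwa [hcx]

theorem Ici_const_subset_posCone (hc : 0 < c) : Ici (Lp.const p π c) ⊆ posCone π p := by
  intro g hg
  filter_upwards [(Lp.coeFn_le _ _).2 hg, Lp.coeFn_const p π c] with x hx hcx
  rw [hcx] at hx
  exact hc.trans_le hx

end Const

/-- `B` is the narrow-framing operator `g ↦ ((1 - β) + β (K g + b)^(1/θ))^θ` on the cone
`posCone π p`; nothing is required of `B` outside the cone. -/
def IsNarrowFramingOperator (β θ : ℝ) (K : Lp ℝ p π → Lp ℝ p π) (b : X → ℝ)
    (B : Lp ℝ p π → Lp ℝ p π) : Prop :=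
  ∀ g ∈ posCone π p, B g =ᵐ[π] fun x => aggregator β θ (K g x + b x)

section NarrowFraming

variable [Fact (1 ≤ p)] {K : Lp ℝ p π →L[ℝ] Lp ℝ p π} {β θ : ℝ} {b : X → ℝ}
  {B : Lp ℝ p π → Lp ℝ p π} {m M : ℝ}

theorem ae_le_apply_add (hK : Monotone K) (hmb : ∀ᵐ x ∂π, m ≤ b x) {g : Lp ℝ p π} (hg : 0 ≤ g) :
    ∀ᵐ x ∂π, m ≤ K g x + b x := by
  have hKg : 0 ≤ K g := by simpa using hK hg
  filter_upwards [hmb, (Lp.coeFn_nonneg _).2 hKg] with x hmx hKx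
  exact hmx.trans (le_add_of_nonneg_left hKx)

namespace IsNarrowFramingOperator

theorem monotoneOn (hB : IsNarrowFramingOperator β θ K b B) (hβ₀ : 0 < β) (hβ₁ : β < 1)
    (hθ : θ ≠ 0) (hK : Monotone K) (hb : ∀ᵐ x ∂π, 0 < b x) : MonotoneOn B (posCone π p) := by
  intro g hg h hh hgh
  have hKg : 0 ≤ K g := by simpa using hK (nonneg_of_mem_posCone hg)
  rw [← Lp.coeFn_le]
  filter_upwards [hB g hg, hB h hh, hb, (Lp.coeFn_nonneg _).2 hKg, (Lp.coeFn_le _ _).2 (hK hgh)]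
    with x hBg hBh hbx hKx hKgh
  rw [hBg, hBh]
  have hKx : 0 ≤ K g x := hKx
  have hg_pos : 0 < K g x + b x := add_pos_of_nonneg_of_pos hKx hbx
  have hle : K g x + b x ≤ K h x + b x := add_le_add hKgh le_rfl
  exact monotoneOn_aggregator hβ₀ hβ₁ hθ hg_pos (hg_pos.trans_le hle) hle

theorem ae_abs_sub_le (hB : IsNarrowFramingOperator β θ K b B) (hβ₀ : 0 < β) (hβ₁ : β < 1)
    (hθ : θ ≠ 0) (hK : Monotone K) (hm : 0 < m) (hmb : ∀ᵐ x ∂π, m ≤ b x) {c : ℝ}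
    (hc : ∀ t, m ≤ t → aggregatorSlope β θ t ≤ c) {g h : Lp ℝ p π} (hg : g ∈ posCone π p)
    (hh : h ∈ posCone π p) : ∀ᵐ x ∂π, |(B g - B h) x| ≤ c * |K (g - h) x| := by
  rw [map_sub]
  filter_upwards [hB g hg, hB h hh, ae_le_apply_add hK hmb (nonneg_of_mem_posCone hg),
    ae_le_apply_add hK hmb (nonneg_of_mem_posCone hh), Lp.coeFn_sub (B g) (B h),
    Lp.coeFn_sub (K g) (K h)] with x hBg hBh hgx hhx hBsub hKsub
  rw [hBsub, hKsub, Pi.sub_apply, Pi.sub_apply, hBg, hBh]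
  simpa only [add_sub_add_right_eq_sub] using abs_aggregator_sub_le hβ₀ hβ₁ hθ hm hc hgx hhx

theorem continuousOn (hB : IsNarrowFramingOperator β θ K b B) (hβ₀ : 0 < β) (hβ₁ : β < 1)
    (hθ : θ ≠ 0) (hK : Monotone K) (hm : 0 < m) (hmb : ∀ᵐ x ∂π, m ≤ b x) :
    ContinuousOn B (posCone π p) := by
  obtain ⟨c, hc⟩ := exists_aggregatorSlope_le (θ := θ) hβ₀ hβ₁ hm
  have hc₀ : 0 ≤ c := (aggregatorSlope_nonneg hβ₀ hβ₁ hm).trans (hc m le_rfl)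
  refine (LipschitzOnWith.of_dist_le' (K := c * ‖K‖) fun g hg h hh => ?_).continuousOn
  rw [dist_eq_norm, dist_eq_norm, mul_assoc]
  exact (Lp.norm_le_mul_norm_of_ae_le_mul (hB.ae_abs_sub_le hβ₀ hβ₁ hθ hK hm hmb hc hg hh)).trans
    (mul_le_mul_of_nonneg_left (K.le_opNorm _) hc₀)

theorem abs_sub_le_smul_apply (hB : IsNarrowFramingOperator β θ K b B) (hβ₀ : 0 < β)
    (hβ₁ : β < 1) (hθ₀ : θ ≠ 0) (hθ₁ : θ ≤ 1) (hK : Monotone K) (hm : 0 < m)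
    (hmb : ∀ᵐ x ∂π, m ≤ b x) {g h : Lp ℝ p π} (hg : g ∈ posCone π p) (hh : h ∈ posCone π p) :
    |B g - B h| ≤ (β ^ θ • K) |g - h| := by
  have hKabs : |K (g - h)| ≤ K |g - h| := abs_le'.2
    ⟨hK (le_abs_self _), by simpa only [map_neg] using hK (neg_le_abs (g - h))⟩
  rw [← Lp.coeFn_le]
  filter_upwards [hB.ae_abs_sub_le hβ₀ hβ₁ hθ₀ hK hm hmb
      (fun t ht => aggregatorSlope_le_rpow hβ₀ hβ₁ hθ₁ (hm.trans_le ht)) hg hh,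
    (Lp.coeFn_le _ _).2 hKabs, Lp.coeFn_abs (B g - B h), Lp.coeFn_abs (K (g - h)),
    Lp.coeFn_smul (β ^ θ) (K |g - h|)] with x hlip hKx hBabs hKabsx hsmul
  rw [hKabsx] at hKx
  rw [hBabs, smul_apply, hsmul]
  exact hlip.trans (mul_le_mul_of_nonneg_left hKx (by positivity))

theorem smul_map_add_le_map_smul [IsFiniteMeasure π] (hB : IsNarrowFramingOperator β θ K b B)
    (hβ₀ : 0 < β) (hβ₁ : β < 1) (hθ : θ < 0 ∨ 1 ≤ θ) (hK : Monotone K) (hm : 0 < m)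
    (hmb : ∀ᵐ x ∂π, m ≤ b x) {g : Lp ℝ p π} (hg : g ∈ posCone π p) {t : ℝ} (ht₀ : 0 < t)
    (ht₁ : t ≤ 1) :
    t • B g + (1 - t) • Lp.const p π (aggregator β θ m) ≤ B (t • g) := by
  have hθ₀ : θ ≠ 0 := hθ.elim LT.lt.ne fun h => (one_pos.trans_le h).ne'
  have hKt : K (t • g) =ᵐ[π] t • ⇑(K g) := by
    rw [map_smul]; exact Lp.coeFn_smul t (K g)
  rw [← Lp.coeFn_le]
  filter_upwards [hB g hg, hB _ (smul_mem_posCone ht₀ hg), hmb,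
    ae_le_apply_add hK hmb (nonneg_of_mem_posCone hg), hKt,
    Lp.coeFn_add (t • B g) ((1 - t) • Lp.const p π (aggregator β θ m)), Lp.coeFn_smul t (B g),
    Lp.coeFn_smul (1 - t) (Lp.const p π (aggregator β θ m)),
    Lp.coeFn_const p π (aggregator β θ m)]
    with x hBg hBt hmx hgx hKx hadd hsmul hsmul_const hconst
  have hconc := (concaveOn_aggregator hβ₀ hβ₁ hθ).2 (hm.trans_le hgx) (hm.trans_le hmx) ht₀.le
    (sub_nonneg.2 ht₁) (add_sub_cancel t 1)
  have hcomb : t • (K g x + b x) + (1 - t) • b x = t * K g x + b x := by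
    simp only [smul_eq_mul]; ring
  rw [hcomb] at hconc
  simp only [hadd, hBt, hKx, Pi.add_apply, hsmul, hsmul_const, Pi.smul_apply, hBg, hconst,
    smul_eq_mul, Function.const_apply] at hconc ⊢
  refine le_trans ?_ hconc
  gcongr
  exact monotoneOn_aggregator hβ₀ hβ₁ hθ₀ hm (hm.trans_le hmx) hmx

variable [IsFiniteMeasure π]

theorem const_le_map (hB : IsNarrowFramingOperator β θ K b B) (hβ₀ : 0 < β) (hβ₁ : β < 1)
    (hθ : θ ≠ 0) (hK : Monotone K) (hm : 0 < m) (hmb : ∀ᵐ x ∂π, m ≤ b x) {g : Lp ℝ p π}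
    (hg : g ∈ posCone π p) : Lp.const p π (aggregator β θ m) ≤ B g := by
  refine const_le_of_ae_le ?_
  filter_upwards [hB g hg, ae_le_apply_add hK hmb (nonneg_of_mem_posCone hg)] with x hBg hgx
  rw [hBg]
  exact monotoneOn_aggregator hβ₀ hβ₁ hθ hm (hm.trans_le hgx) hgx

theorem exists_map_le_smul_const (hB : IsNarrowFramingOperator β θ K b B) (hβ₀ : 0 < β)
    (hβ₁ : β < 1) (hθ : θ ≠ 0) (hK : Monotone K) (hm : 0 < m) (hmb : ∀ᵐ x ∂π, m ≤ b x)
    (hbM : ∀ᵐ x ∂π, b x ≤ M) {g : Lp ℝ p π} (hg : g ∈ posCone π p) {N : ℝ}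
    (hN : ∀ᵐ x ∂π, K g x ≤ N) {c : ℝ} (hc : 0 < c) :
    ∃ a : ℝ, B g ≤ a • Lp.const p π c := by
  refine ⟨aggregator β θ (N + M) / c, ?_⟩
  have hconst : (aggregator β θ (N + M) / c) • Lp.const p π c
      = Lp.const p π (aggregator β θ (N + M)) := by
    have := (Lp.constₗ p π ℝ).map_smul (aggregator β θ (N + M) / c) c
    rw [smul_eq_mul, div_mul_cancel₀ _ hc.ne'] at this
    exact this.symm
  rw [hconst]
  refine le_const_of_ae_le ?_
  filter_upwards [hB g hg, ae_le_apply_add hK hmb (nonneg_of_mem_posCone hg), hN, hbM]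
    with x hBg hgx hNx hMx
  have hle : K g x + b x ≤ N + M := add_le_add hNx hMx
  rw [hBg]
  exact monotoneOn_aggregator hβ₀ hβ₁ hθ (hm.trans_le hgx) (hm.trans_le (hgx.trans hle)) hle

theorem floorConcaveOn (hB : IsNarrowFramingOperator β θ K b B) (hβ₀ : 0 < β) (hβ₁ : β < 1)
    (hθ : θ < 0 ∨ 1 ≤ θ) (hK : Monotone K) (hK_bdd : ∀ g, ∃ N : ℝ, ∀ᵐ x ∂π, K g x ≤ N)
    (hm : 0 < m) (hmb : ∀ᵐ x ∂π, m ≤ b x) (hbM : ∀ᵐ x ∂π, b x ≤ M) :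
    FloorConcaveOn (posCone π p) (Lp.const p π (aggregator β θ m)) B := by
  have hθ₀ : θ ≠ 0 := hθ.elim LT.lt.ne fun h => (one_pos.trans_le h).ne'
  have hc : 0 < aggregator β θ m := aggregator_pos hβ₀ hβ₁ hm
  exact {
    Ici_subset := Ici_const_subset_posCone hc
    smul_mem := fun _ ht _ hg => smul_mem_posCone ht hg
    floor_nonneg := nonneg_of_mem_posCone (Ici_const_subset_posCone hc self_mem_Ici)
    floor_le_map := fun _ hg => hB.const_le_map hβ₀ hβ₁ hθ₀ hK hm hmb hg
    monotoneOn := hB.monotoneOn hβ₀ hβ₁ hθ₀ hK (hmb.mono fun _ => hm.trans_le)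
    smul_add_le_map := fun _ hg _ ht₀ ht₁ =>
      hB.smul_map_add_le_map_smul hβ₀ hβ₁ hθ hK hm hmb hg ht₀ ht₁
    exists_map_le_smul_floor := fun g hg =>
      hB.exists_map_le_smul_const hβ₀ hβ₁ hθ₀ hK hm hmb hbM hg (hK_bdd g).choose_spec hc }

theorem exists_map_le_self (hB : IsNarrowFramingOperator β θ K b B) (hK : Monotone K)
    (hb : ∀ᵐ x ∂π, 0 < b x) (hbM : ∀ᵐ x ∂π, b x ≤ M) {c r : ℝ} (hc : 0 < c) (hr : 0 ≤ r)
    (hsum : Summable fun n => ‖(r • K) ^ n‖)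
    (haff : ∀ t, 0 < t → aggregator β θ t ≤ c + r * t) : ∃ v ∈ posCone π p, B v ≤ v := by
  set C : ℝ := c + r * max M 0
  have hC : 0 < C := add_pos_of_pos_of_nonneg hc (mul_nonneg hr (le_max_right _ _))
  have hC_mem : Lp.const p π C ∈ posCone π p := Ici_const_subset_posCone hC self_mem_Ici
  have hrK : Monotone (r • K) := fun g h hgh => smul_le_smul_of_nonneg_left (hK hgh) hr
  obtain ⟨v, hCv, hv⟩ :=
    exists_le_eq_add_apply_of_summable_norm_pow hrK hsum (nonneg_of_mem_posCone hC_mem)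
  have hv_mem : v ∈ posCone π p := Ici_const_subset_posCone hC hCv
  have hKv : 0 ≤ K v := by simpa using hK (nonneg_of_mem_posCone hv_mem)
  refine ⟨v, hv_mem, ?_⟩
  conv_rhs => rw [hv]
  rw [← Lp.coeFn_le]
  filter_upwards [hB v hv_mem, (Lp.coeFn_nonneg _).2 hKv, hb, hbM, Lp.coeFn_const p π C,
    Lp.coeFn_add (Lp.const p π C) ((r • K) v), Lp.coeFn_smul r (K v)]
    with x hBv hKx hbx hMx hconst hadd hsmul
  have hKx : 0 ≤ K v x := hKx
  have hrb : r * b x ≤ r * max M 0 := mul_le_mul_of_nonneg_left (hMx.trans (le_max_left _ _)) hr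
  rw [hBv, hadd, Pi.add_apply, hconst, smul_apply, hsmul, Pi.smul_apply, smul_eq_mul,
    Function.const_apply]
  calc aggregator β θ (K v x + b x)
      ≤ c + r * (K v x + b x) := haff _ (by linarith)
    _ ≤ C + r * K v x := by simp only [C]; linarith

theorem exists_map_le_self_of_concave (hB : IsNarrowFramingOperator β θ K b B) (hβ₀ : 0 < β)
    (hβ₁ : β < 1) (hθ : θ < 0 ∨ 1 ≤ θ) (hK : Monotone K) (hb : ∀ᵐ x ∂π, 0 < b x)
    (hbM : ∀ᵐ x ∂π, b x ≤ M) (hΛ : 0 < θ → β * specRad K ^ (1 / θ) < 1) :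
    ∃ v ∈ posCone π p, B v ≤ v := by
  rcases hθ with hneg | hone
  · refine hB.exists_map_le_self hK hb hbM (Real.rpow_pos_of_pos (sub_pos.2 hβ₁) θ) le_rfl
      (summable_norm_pow_of_norm_pow_lt_one one_ne_zero (by simp)) fun t ht => ?_
    simpa using aggregator_le_of_neg hβ₀ hβ₁ hneg ht
  · have hθ : 0 < θ := one_pos.trans_le hone
    obtain ⟨x, hKx, hxβ⟩ := exists_between (specRad_lt_inv_rpow hβ₀ hθ (hΛ hθ))
    have hx : 0 < x := (specRad_nonneg K).trans_lt hKx
    obtain ⟨c, hc, haff⟩ := exists_aggregator_le_add_mul hβ₀ hβ₁ hθ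
      ((lt_inv_comm₀ hx (Real.rpow_pos_of_pos hβ₀ θ)).1 hxβ)
    exact hB.exists_map_le_self hK hb hbM hc (inv_pos.2 hx).le
      (summable_norm_pow_smul_of_specRad_lt (inv_pos.2 hx) (by rwa [inv_inv])) haff

theorem exists_fixedPoint (hB : IsNarrowFramingOperator β θ K b B) (hβ₀ : 0 < β) (hβ₁ : β < 1)
    (hθ : θ ≠ 0) (hK : Monotone K) (hK_bdd : ∀ g, ∃ N : ℝ, ∀ᵐ x ∂π, K g x ≤ N) (hm : 0 < m)
    (hmb : ∀ᵐ x ∂π, m ≤ b x) (hbM : ∀ᵐ x ∂π, b x ≤ M)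
    (hΛ : 0 < θ → β * specRad K ^ (1 / θ) < 1) :
    ∃ z ∈ posCone π p, B z = z ∧
      ∀ g ∈ posCone π p, Tendsto (fun n => B^[n] g) atTop (𝓝 z) := by
  have hB_cont : ContinuousOn B (posCone π p) := hB.continuousOn hβ₀ hβ₁ hθ hK hm hmb
  by_cases hconc : θ < 0 ∨ 1 ≤ θ
  · obtain ⟨v, hv, hBv⟩ := hB.exists_map_le_self_of_concave hβ₀ hβ₁ hconc hK
      (hmb.mono fun _ => hm.trans_le) hbM hΛ
    exact (hB.floorConcaveOn hβ₀ hβ₁ hconc hK hK_bdd hm hmb hbM).exists_fixedPoint hB_cont hv hBv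
  · obtain ⟨hθ₀, hθ₁⟩ : 0 ≤ θ ∧ θ < 1 := by simpa using hconc
    have hθ₀ : 0 < θ := hθ₀.lt_of_ne' hθ
    have hβθ : 0 < β ^ θ := Real.rpow_pos_of_pos hβ₀ θ
    exact exists_fixedPoint_of_abs_sub_le_apply
      (fun _ _ hgh => smul_le_smul_of_nonneg_left (hK hgh) hβθ.le)
      (summable_norm_pow_smul_of_specRad_lt hβθ (specRad_lt_inv_rpow hβ₀ hθ₀ (hΛ hθ₀)))
      (Ici_const_subset_posCone (aggregator_pos hβ₀ hβ₁ hm))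
      (fun _ hg => hB.const_le_map hβ₀ hβ₁ hθ hK hm hmb hg) hB_cont
      fun _ hg _ hh => hB.abs_sub_le_smul_apply hβ₀ hβ₁ hθ hθ₁.le hK hm hmb hg hh

end IsNarrowFramingOperator

end NarrowFraming

section KernelOperator

theorem le_smul_withDensity {μ : Measure X} {c : ℝ≥0∞} (hc₀ : c ≠ 0) (hc : c ≠ ⊤)
    {f : X → ℝ≥0∞} (hf : ∀ᵐ x ∂μ, c ≤ f x) : μ ≤ c⁻¹ • μ.withDensity f := by
  calc μ = c⁻¹ • μ.withDensity fun _ => c := by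
        rw [withDensity_const, smul_smul, ENNReal.inv_mul_cancel hc₀ hc, one_smul]
    _ ≤ c⁻¹ • μ.withDensity f := by gcongr; exact withDensity_mono hf

variable [Fact (1 ≤ p)] {μ : Measure X} {k : X → X → ℝ} {K : Lp ℝ p π →L[ℝ] Lp ℝ p π}

theorem monotone_of_kernel_nonneg (hμ : μ ≪ π) (hk : ∀ x y, 0 ≤ k x y)
    (hK : ∀ g : Lp ℝ p π, K g =ᵐ[π] fun x => ∫ y, k x y * g y ∂μ) : Monotone K := by
  refine (monotone_iff_map_nonneg K).2 fun g hg => ?_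
  have hg_ae : ∀ᵐ y ∂μ, 0 ≤ g y := hμ.ae_le ((Lp.coeFn_nonneg g).2 hg)
  rw [← Lp.coeFn_nonneg]
  filter_upwards [hK g] with x hx
  rw [hx]
  exact integral_nonneg_of_ae (hg_ae.mono fun y hy => mul_nonneg (hk x y) hy)

theorem ae_le_of_kernel_bounded [IsFiniteMeasure π] {c : ℝ≥0∞} (hc : c ≠ ⊤)
    (hμ : μ ≤ c • π) {κ : ℝ} (hk : ∀ x y, |k x y| ≤ κ)
    (hK : ∀ g : Lp ℝ p π, K g =ᵐ[π] fun x => ∫ y, k x y * g y ∂μ) (g : Lp ℝ p π) :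
    ∀ᵐ x ∂π, K g x ≤ ∫ y, κ * |g y| ∂μ := by
  have hg : Integrable g μ :=
    ((Lp.memLp g).integrable Fact.out).of_measure_le_smul hc hμ
  filter_upwards [hK g] with x hx
  rw [hx]
  refine (Real.le_norm_self _).trans (norm_integral_le_of_norm_le (hg.abs.const_mul κ) ?_)
  refine ae_of_all _ fun y => ?_
  rw [norm_mul]
  exact mul_le_mul_of_nonneg_right (hk x y) (abs_nonneg _)

end KernelOperator

end Lp

section CompactSpace

variable {X : Type*} [TopologicalSpace X] [CompactSpace X] {f : X → ℝ}

theorem exists_pos_forall_le (hf : Continuous f) (hf_pos : ∀ x, 0 < f x) :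
    ∃ m > 0, ∀ x, m ≤ f x := by
  simpa using isCompact_univ.exists_forall_le' hf.continuousOn fun x _ => hf_pos x

theorem exists_forall_abs_le (hf : Continuous f) : ∃ M, ∀ x, |f x| ≤ M := by
  simpa using isCompact_univ.exists_bound_of_continuousOn hf.continuousOn

end CompactSpace

theorem narrow_framing_existence_stability_general {X : Type*} [TopologicalSpace X]
    [CompactSpace X] [MeasurableSpace X] {μ π : Measure X} [IsFiniteMeasure π] {d : X → ℝ}
    (hd_cont : Continuous d) (hd_pos : ∀ x, 0 < d x)
    (hπ : π = μ.withDensity fun x => ENNReal.ofReal (d x)) {p : ℝ≥0∞} [Fact (1 ≤ p)]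
    {k : X → X → ℝ} (hk_cont : Continuous (Function.uncurry k)) (hk_nonneg : ∀ x y, 0 ≤ k x y)
    {K : Lp ℝ p π →L[ℝ] Lp ℝ p π}
    (hK : ∀ g : Lp ℝ p π, K g =ᵐ[π] fun x => ∫ y, k x y * g y ∂μ)
    {β θ : ℝ} (hβ₀ : 0 < β) (hβ₁ : β < 1) (hθ : θ ≠ 0)
    {b : X → ℝ} (hb_cont : Continuous b) (hb_pos : ∀ x, 0 < b x)
    {B : Lp ℝ p π → Lp ℝ p π} (hB : IsNarrowFramingOperator β θ K b B)
    (hΛ : 0 < θ → β * specRad K ^ (1 / θ) < 1) :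
    ∃ z ∈ posCone π p, B z = z ∧
      ∀ g ∈ posCone π p, Tendsto (fun n => B^[n] g) atTop (𝓝 z) := by
  subst hπ
  obtain ⟨δ, hδ, hδd⟩ := exists_pos_forall_le hd_cont hd_pos
  obtain ⟨m, hm, hmb⟩ := exists_pos_forall_le hb_cont hb_pos
  obtain ⟨M, hbM⟩ := exists_forall_abs_le hb_cont
  obtain ⟨κ, hkκ⟩ := exists_forall_abs_le hk_cont
  have hδ_ne : ENNReal.ofReal δ ≠ 0 := (ENNReal.ofReal_pos.2 hδ).ne'
  have hμ : μ ≤ (ENNReal.ofReal δ)⁻¹ • μ.withDensity fun x => ENNReal.ofReal (d x) :=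
    le_smul_withDensity hδ_ne ENNReal.ofReal_ne_top
      (ae_of_all _ fun x => ENNReal.ofReal_le_ofReal (hδd x))
  have hK_mono : Monotone K := monotone_of_kernel_nonneg
    (Measure.absolutelyContinuous_of_le_smul hμ) hk_nonneg hK
  have hK_bdd := ae_le_of_kernel_bounded (ENNReal.inv_ne_top.2 hδ_ne) hμ
    (fun x y => hkκ (x, y)) hK
  exact hB.exists_fixedPoint hβ₀ hβ₁ hθ hK_mono (fun g => ⟨_, hK_bdd g⟩) hm (ae_of_all _ hmb)
    (ae_of_all _ fun x => (le_abs_self _).trans (hbM x)) hΛ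

/-- **Existence, uniqueness and global stability for recursive utility with
narrow framing.**  In the compact-state-space setting, with the narrow-framing
operator `(B g)(x) = ((1−β) + β (K g(x) + b(x))^(1/θ))^θ` on the cone of a.e.
strictly positive functions in `L_p(X,π)`: if `Λ_p = β ρ(K)^(1/θ) < 1`, then
`B` has a fixed point `g* ∈ L_p(X,π)_+`, and `B` is globally stable in the
sense that `‖B^n g − g*‖_p → 0` for every `g ∈ L_p(X,π)_+`. -/
theorem narrow_framing_existence_stability
    {X : Type*} [MetricSpace X] [CompactSpace X] [MeasurableSpace X] [BorelSpace X]
    (μ π : Measure X) [IsFiniteMeasure μ] [μ.IsOpenPosMeasure] [IsProbabilityMeasure π]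
    (d : X → ℝ) (hd_cont : Continuous d) (hd_pos : ∀ x, 0 < d x)
    (hπ : π = μ.withDensity (fun x => ENNReal.ofReal (d x)))
    (p : ℝ≥0∞) [Fact (1 ≤ p)] (hp_top : p ≠ ⊤)
    (k : X → X → ℝ) (hk_cont : Continuous (Function.uncurry k))
    (hk_pos : ∀ x y, 0 < k x y)
    (K : Lp ℝ p π →L[ℝ] Lp ℝ p π)
    (hK : ∀ g : Lp ℝ p π, (K g : X → ℝ) =ᵐ[π] fun x => ∫ y, k x y * g y ∂μ)
    (β θ : ℝ) (hβ0 : 0 < β) (hβ1 : β < 1) (hθ : θ ≠ 0)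
    (b : X → ℝ) (hb_cont : Continuous b) (hb_pos : ∀ x, 0 < b x)
    (B : Lp ℝ p π → Lp ℝ p π)
    (hB : ∀ g : Lp ℝ p π, (∀ᵐ x ∂π, 0 < g x) →
      (B g : X → ℝ) =ᵐ[π]
        fun x => ((1 - β) + β * ((K g : X → ℝ) x + b x) ^ (1 / θ)) ^ θ)
    (hΛ : β * specRad K ^ (1 / θ) < 1) :
    ∃ gstar : Lp ℝ p π, (∀ᵐ x ∂π, 0 < gstar x) ∧ B gstar = gstar ∧
      ∀ g : Lp ℝ p π, (∀ᵐ x ∂π, 0 < g x) →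
        Tendsto (fun n => B^[n] g) atTop (𝓝 gstar) :=
  narrow_framing_existence_stability_general hd_cont hd_pos hπ hk_cont (fun x y => (hk_pos x y).le)
    hK hβ0 hβ1 hθ hb_cont hb_pos hB fun _ => hΛ
end
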